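/- arXiv:2510.23560 — 4 statements merged into one kernel-verified Lean document; each statement's English description precedes it below -/
import Mathlib

section
/- Let α, β, γ > 0 be real numbers and let f ∈ 𝒜. Then for every z ∈ 𝔻 the recurrence relation z·(ℰ^γ_{α,β} f)′(z) = (1 − γ)·ℰ^γ_{α,β} f(z) + γ·ℰ^{γ+1}_{α,β} f(z) holds. -/
open Complex Metric Set Filter

/-- Coefficient of the normalized three-parameter Mittag-Leffler function:
`Γ(β)·(γ)_n / (Γ(αn+β)·n!)` where `(γ)_n = Γ(γ+n)/Γ(γ)`. -/
noncomputable def mlCoeff (α β γ : ℝ) (n : ℕ) : ℝ :=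
  Real.Gamma β * (Real.Gamma (γ + n) / Real.Gamma γ) /
    (Real.Gamma (α * n + β) * n.factorial)

/-- The Mittag-Leffler operator `ℰ^γ_{α,β}` acting on a function with coefficient
sequence `a` (where `a n` is the coefficient of `z^(n+2)`, i.e. the paper's `a_{n+2}`):
`ℰ^γ_{α,β} f(z) = z + Σ_{n=1}^∞ [Γ(β)(γ)_n/(Γ(αn+β)n!)] a_{n+1} z^{n+1}`. -/
noncomputable def mlOp (α β γ : ℝ) (a : ℕ → ℂ) (z : ℂ) : ℂ :=
  z + ∑' n : ℕ, (mlCoeff α β γ (n + 1) : ℂ) * a n * z ^ (n + 2)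

/-- `f ∈ 𝒜` with coefficient sequence `a`: `f` is analytic on the unit disc and
`f(z) = z + Σ_{n=1}^∞ a_{n+1} z^{n+1}` (here `a n` is the paper's `a_{n+2}`). -/
def InA (f : ℂ → ℂ) (a : ℕ → ℂ) : Prop :=
  AnalyticOnNhd ℂ f (ball 0 1) ∧
    ∀ z ∈ ball (0 : ℂ) 1, HasSum (fun n : ℕ => a n * z ^ (n + 2)) (f z - z)

/-- Subordination `F ≺ G` on the unit disc. -/
def IsSubordinate (F G : ℂ → ℂ) : Prop :=
  ∃ ϑ : ℂ → ℂ, AnalyticOnNhd ℂ ϑ (ball 0 1) ∧ ϑ 0 = 0 ∧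
    (∀ z ∈ ball (0 : ℂ) 1, ϑ z ∈ ball (0 : ℂ) 1) ∧
    ∀ z ∈ ball (0 : ℂ) 1, F z = G (ϑ z)

/-- The cardioid function `h_c(z) = 1 + 4z/3 + 2z²/3`. -/
noncomputable def hC (z : ℂ) : ℂ := 1 + 4 * z / 3 + 2 * z ^ 2 / 3

theorem aux_rec (α β γ : ℝ) (hγ : 0 < γ) (n : ℕ) :
    γ * mlCoeff α β (γ + 1) n = (γ + n) * mlCoeff α β γ n := by
  unfold mlCoeff
  have h1 : Real.Gamma (γ + 1 + n) = (γ + n) * Real.Gamma (γ + n) := by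
    rw [← Real.Gamma_add_one (by positivity)]; congr 1; ring
  have h2 : Real.Gamma γ ≠ 0 := (Real.Gamma_pos_of_pos hγ).ne'
  rw [h1, Real.Gamma_add_one hγ.ne']
  field_simp

theorem aux_poch (γ : ℝ) (hγ : 0 < γ) (K : ℕ) (hK : γ ≤ K) (n : ℕ) :
    Real.Gamma (γ + n) / Real.Gamma γ / n.factorial ≤ ((n : ℝ) + 1) ^ K := by
  have h2 : 0 < Real.Gamma γ := Real.Gamma_pos_of_pos hγ
  induction n with
  | zero => simp [h2.ne']
  | succ n ih =>
    have h1 : Real.Gamma (γ + (n + 1 : ℕ)) = (γ + n) * Real.Gamma (γ + n) := by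
      rw [← Real.Gamma_add_one (by positivity)]; congr 1; push_cast; ring
    have hn : (0 : ℝ) < n + 1 := by positivity
    have h3 : Real.Gamma (γ + (n + 1 : ℕ)) / Real.Gamma γ / (n + 1).factorial
        = (Real.Gamma (γ + n) / Real.Gamma γ / n.factorial) * ((γ + n) / (n + 1)) := by
      rw [h1, Nat.factorial_succ]; push_cast; field_simp
    have hb := one_add_mul_le_pow (a := 1 / ((n : ℝ) + 1))
      (by have : 0 ≤ 1 / ((n : ℝ) + 1) := by positivity
          linarith) K
    have h4 : (γ + n) / (n + 1) ≤ (1 + 1 / ((n : ℝ) + 1)) ^ K := by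
      refine le_trans ?_ hb
      rw [div_le_iff₀ hn]
      field_simp
      linarith
    rw [h3]
    calc _ ≤ ((n : ℝ) + 1) ^ K * (1 + 1 / ((n : ℝ) + 1)) ^ K := by
            apply mul_le_mul ih h4 <;> positivity
      _ = _ := by
            rw [← mul_pow]; congr 1; push_cast; field_simp; try ring

theorem aux_gamma (α β : ℝ) (hα : 0 < α) (hβ : 0 < β) :
    ∃ C : ℝ, 0 < C ∧ ∀ n : ℕ, (Real.Gamma (α * n + β))⁻¹ ≤ C := by
  have ht : Tendsto (fun n : ℕ => α * (n : ℝ) + β) atTop atTop :=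
    tendsto_atTop_add_const_right _ _ (tendsto_natCast_atTop_atTop.const_mul_atTop hα)
  obtain ⟨N, hN⟩ := eventually_atTop.1 (ht.eventually_ge_atTop 2)
  refine ⟨1 + ∑ n ∈ Finset.range N, (Real.Gamma (α * n + β))⁻¹, ?_, ?_⟩
  · have : 0 ≤ ∑ n ∈ Finset.range N, (Real.Gamma (α * n + β))⁻¹ :=
      Finset.sum_nonneg fun i _ => inv_nonneg.2 (Real.Gamma_pos_of_pos (by positivity)).le
    linarith
  · intro n
    have h0 : ∀ i ∈ Finset.range N, 0 ≤ (Real.Gamma (α * i + β))⁻¹ :=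
      fun i _ => inv_nonneg.2 (Real.Gamma_pos_of_pos (by positivity)).le
    by_cases h : n < N
    · have := Finset.single_le_sum h0 (Finset.mem_range.2 h)
      linarith
    · have h2 := hN n (not_lt.1 h)
      have h3 : Real.Gamma 2 ≤ Real.Gamma (α * n + β) :=
        Real.Gamma_strictMonoOn_Ici.monotoneOn (by simp) h2 h2
      rw [Real.Gamma_two] at h3
      have := inv_le_one_of_one_le₀ h3
      have := Finset.sum_nonneg h0
      linarith

theorem aux_bound (α β γ : ℝ) (hα : 0 < α) (hβ : 0 < β) (hγ : 0 < γ) :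
    ∃ C : ℝ, ∃ K : ℕ, 0 < C ∧ ∀ n : ℕ, |mlCoeff α β γ n| ≤ C * ((n : ℝ) + 1) ^ K := by
  obtain ⟨C, hC, h⟩ := aux_gamma α β hα hβ
  obtain ⟨K, hK⟩ := exists_nat_ge γ
  have hb := Real.Gamma_pos_of_pos hβ
  refine ⟨Real.Gamma β * C, K, by positivity, fun n => ?_⟩
  have h1 : 0 < Real.Gamma (α * n + β) := Real.Gamma_pos_of_pos (by positivity)
  have h2 : 0 < Real.Gamma (γ + n) := Real.Gamma_pos_of_pos (by positivity)
  have h3 : 0 < Real.Gamma γ := Real.Gamma_pos_of_pos hγ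
  have e : mlCoeff α β γ n = Real.Gamma β * (Real.Gamma (α * n + β))⁻¹ *
      (Real.Gamma (γ + n) / Real.Gamma γ / n.factorial) := by
    unfold mlCoeff; field_simp
  rw [e, abs_of_nonneg (by positivity)]
  have := h n
  have := aux_poch γ hγ K hK n
  gcongr

theorem aux_sum (α β γ : ℝ) (hα : 0 < α) (hβ : 0 < β) (hγ : 0 < γ)
    (f : ℂ → ℂ) (a : ℕ → ℂ) (hf : InA f a) (r : ℝ) (hr0 : 0 < r) (hr1 : r < 1) :
    Summable (fun n : ℕ => ‖(mlCoeff α β γ (n + 1) : ℂ) * a n‖ * ((n : ℝ) + 2) * r ^ (n + 1)) := by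
  obtain ⟨s, hrs, hs1⟩ := exists_between hr1
  have hs0 : 0 < s := hr0.trans hrs
  obtain ⟨C, K, hC, hb⟩ := aux_bound α β γ hα hβ hγ
  have hsum := (hf.2 (s : ℂ) (by simp [abs_of_pos hs0, hs1])).summable
  obtain ⟨M, hM⟩ := hsum.tendsto_atTop_zero.norm.bddAbove_range
  have hM' : ∀ n, ‖a n‖ * s ^ (n + 2) ≤ M := fun n => by
    have := hM ⟨n, rfl⟩
    simpa [abs_of_pos hs0] using this
  have hq : ‖r / s‖ < 1 := by
    rw [Real.norm_of_nonneg (by positivity), div_lt_one hs0]; exact hrs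
  have hg := summable_pow_mul_geometric_of_norm_lt_one (K + 1) hq
  have hg2 := ((summable_nat_add_iff 2).2 hg).mul_left (C * M / r)
  refine Summable.of_nonneg_of_le (fun n => by positivity) (fun n => ?_) hg2
  have h1 := hb (n + 1)
  have h2 := hM' n
  have hM0 : 0 ≤ M := le_trans (by positivity) h2
  rw [norm_mul, Complex.norm_real, Real.norm_eq_abs]
  have h3 : ‖a n‖ ≤ M / s ^ (n + 2) := by rwa [le_div_iff₀ (by positivity)]
  calc _ ≤ (C * (((n + 1 : ℕ) : ℝ) + 1) ^ K) * (M / s ^ (n + 2)) * ((n : ℝ) + 2) * r ^ (n + 1) := by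
        gcongr
    _ = _ := by
        have : (((n + 1 : ℕ) : ℝ) + 1) = n + 2 := by push_cast; ring
        rw [this, div_pow]; push_cast; field_simp; ring

theorem aux_summable (α β γ : ℝ) (hα : 0 < α) (hβ : 0 < β) (hγ : 0 < γ)
    (f : ℂ → ℂ) (a : ℕ → ℂ) (hf : InA f a) (z : ℂ) (hz : ‖z‖ < 1) :
    Summable (fun n : ℕ => (mlCoeff α β γ (n + 1) : ℂ) * a n * z ^ (n + 2)) := by
  obtain ⟨r, hr, hr1⟩ := exists_between hz
  have hr0 : 0 < r := (norm_nonneg z).trans_lt hr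
  refine Summable.of_norm_bounded (aux_sum α β γ hα hβ hγ f a hf r hr0 hr1) fun n => ?_
  rw [norm_mul, norm_pow]
  have h1 : ‖z‖ ^ (n + 2) ≤ r ^ (n + 1) := by
    calc ‖z‖ ^ (n + 2) ≤ ‖z‖ ^ (n + 1) := pow_le_pow_of_le_one (norm_nonneg _) hz.le (by omega)
      _ ≤ _ := by gcongr
  have h2 : (1 : ℝ) ≤ n + 2 := by
    have : (0 : ℝ) ≤ n := by positivity
    linarith
  calc _ ≤ ‖(mlCoeff α β γ (n + 1) : ℂ) * a n‖ * 1 * r ^ (n + 1) := by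
        rw [mul_one]; gcongr
    _ ≤ _ := by gcongr

/-- recurrence `z(ℰ^γ_{α,β}f)'(z) = (1-γ)ℰ^γ_{α,β}f(z) + γℰ^{γ+1}_{α,β}f(z)`. -/
theorem stmt0 (α β γ : ℝ) (hα : 0 < α) (hβ : 0 < β) (hγ : 0 < γ)
    (f : ℂ → ℂ) (a : ℕ → ℂ) (hf : InA f a) :
    ∀ z ∈ ball (0 : ℂ) 1,
      z * deriv (mlOp α β γ a) z
        = (1 - (γ : ℂ)) * mlOp α β γ a z + (γ : ℂ) * mlOp α β (γ + 1) a z := by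
  intro z hz
  rw [mem_ball_zero_iff] at hz
  obtain ⟨r, hr, hr1⟩ := exists_between hz
  have hr0 : 0 < r := (norm_nonneg z).trans_lt hr
  have hs := aux_summable α β γ hα hβ hγ f a hf z hz
  have hs' := aux_summable α β (γ + 1) hα hβ (by positivity) f a hf z hz
  have hd : HasDerivAt (fun w => ∑' n : ℕ, (mlCoeff α β γ (n + 1) : ℂ) * a n * w ^ (n + 2))
      (∑' n : ℕ, (mlCoeff α β γ (n + 1) : ℂ) * a n * (((n + 2 : ℕ) : ℂ) * z ^ (n + 1))) z := by
    refine hasDerivAt_tsum_of_isPreconnected (t := ball (0 : ℂ) r)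
      (g := fun (n : ℕ) w => (mlCoeff α β γ (n + 1) : ℂ) * a n * w ^ (n + 2))
      (g' := fun (n : ℕ) w => (mlCoeff α β γ (n + 1) : ℂ) * a n * (((n + 2 : ℕ) : ℂ) * w ^ (n + 1)))
      (aux_sum α β γ hα hβ hγ f a hf r hr0 hr1) isOpen_ball
      (convex_ball _ _).isPreconnected ?_ ?_ (mem_ball_zero_iff.2 hr) hs (mem_ball_zero_iff.2 hr)
    · intro n y _
      exact (hasDerivAt_pow (n + 2) y).const_mul _
    · intro n y hy
      rw [mem_ball_zero_iff] at hy
      rw [norm_mul _ (_ * _), norm_mul _ (y ^ _), norm_pow, Complex.norm_natCast, ← mul_assoc]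
      push_cast
      gcongr
  have hd2 : HasDerivAt (mlOp α β γ a) _ z := (hasDerivAt_id z).add hd
  rw [hd2.deriv]
  unfold mlOp
  have key : z * ∑' n : ℕ, (mlCoeff α β γ (n + 1) : ℂ) * a n * (((n + 2 : ℕ) : ℂ) * z ^ (n + 1))
      = (1 - (γ : ℂ)) * ∑' n : ℕ, (mlCoeff α β γ (n + 1) : ℂ) * a n * z ^ (n + 2)
        + (γ : ℂ) * ∑' n : ℕ, (mlCoeff α β (γ + 1) (n + 1) : ℂ) * a n * z ^ (n + 2) := by
    rw [← tsum_mul_left, ← tsum_mul_left, ← tsum_mul_left,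
      ← (hs.mul_left _).tsum_add (hs'.mul_left _)]
    congr 1
    ext n
    have h := congrArg (fun x : ℝ => (x : ℂ)) (aux_rec α β γ hγ (n + 1))
    push_cast at h ⊢
    linear_combination (-(a n * z ^ (n + 2))) * h
  linear_combination key
end

section
/- Let γ ≥ 1 be real and for z ∈ 𝔻 set I(z) = ∫₀¹ u^{γ−1} e^{4zu/3 + z²u²/3} du and, whenever I(z) ≠ 0, q(z) = e^{4z/3 + z²/3}/I(z) − γ + 1. Then for every z ∈ 𝔻 with I(z) ≠ 0 one has q(z) + γ − 1 ≠ 0 and q solves the Briot–Bouquet differential equation q(z) + z·q′(z)/(q(z) + γ − 1) = 1 + 4z/3 + 2z²/3. -/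
open Complex Metric Set

/-- `I(z) = ∫₀¹ u^{γ-1} e^{4zu/3 + z²u²/3} du`. -/
noncomputable def Ifun (γ : ℝ) (z : ℂ) : ℂ :=
  ∫ u in (0:ℝ)..1, ((u ^ (γ - 1) : ℝ) : ℂ) *
    Complex.exp (4 * z * (u : ℂ) / 3 + z ^ 2 * (u : ℂ) ^ 2 / 3)

/-- `q(z) = e^{4z/3+z²/3}/I(z) - γ + 1`. -/
noncomputable def qFun (γ : ℝ) (z : ℂ) : ℂ :=
  Complex.exp (4 * z / 3 + z ^ 2 / 3) / Ifun γ z - (γ : ℂ) + 1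

theorem aux_hasDeriv (γ : ℝ) (hγ : 1 ≤ γ) (z : ℂ) (hz : z ∈ ball (0 : ℂ) 1) :
    HasDerivAt (Ifun γ) (∫ u in (0:ℝ)..1, ((u ^ (γ - 1) : ℝ) : ℂ) *
      (Complex.exp (4 * z * (u : ℂ) / 3 + z ^ 2 * (u : ℂ) ^ 2 / 3) *
        (4 * (u : ℂ) / 3 + 2 * z * (u : ℂ) ^ 2 / 3))) z := by
  have hc : Continuous (fun u : ℝ => u ^ (γ - 1)) :=
    Real.continuous_rpow_const (by linarith)
  have hcc : Continuous (fun u : ℝ => ((u ^ (γ - 1) : ℝ) : ℂ)) :=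
    Complex.continuous_ofReal.comp hc
  have key := intervalIntegral.hasDerivAt_integral_of_dominated_loc_of_deriv_le
    (μ := MeasureTheory.volume) (a := 0) (b := 1) (𝕜 := ℂ) (x₀ := z)
    (s := ball (0 : ℂ) 1) (bound := fun _ => Real.exp 2 * 2)
    (F := fun (z : ℂ) (u : ℝ) => ((u ^ (γ - 1) : ℝ) : ℂ) *
      Complex.exp (4 * z * (u : ℂ) / 3 + z ^ 2 * (u : ℂ) ^ 2 / 3))
    (F' := fun (z : ℂ) (u : ℝ) => ((u ^ (γ - 1) : ℝ) : ℂ) *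
      (Complex.exp (4 * z * (u : ℂ) / 3 + z ^ 2 * (u : ℂ) ^ 2 / 3) *
        (4 * (u : ℂ) / 3 + 2 * z * (u : ℂ) ^ 2 / 3)))
    (isOpen_ball.mem_nhds hz) ?_ ?_ ?_ ?_ ?_ ?_
  · exact key.2
  · refine Filter.Eventually.of_forall fun x => Continuous.aestronglyMeasurable ?_
    exact hcc.mul (by fun_prop)
  · refine Continuous.intervalIntegrable ?_ _ _
    exact hcc.mul (by fun_prop)
  · refine Continuous.aestronglyMeasurable ?_
    exact hcc.mul (by fun_prop)
  · refine Filter.Eventually.of_forall fun u hu x hx => ?_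
    rw [uIoc_of_le zero_le_one] at hu
    obtain ⟨h0, h1⟩ := hu
    have hx1 : ‖x‖ ≤ 1 := by simpa using (mem_ball_zero_iff.1 hx).le
    have hu1 : ‖(u : ℂ)‖ ≤ 1 := by
      rw [Complex.norm_real, Real.norm_eq_abs, abs_of_pos h0]; exact h1
    have hp : ‖((u ^ (γ - 1) : ℝ) : ℂ)‖ ≤ 1 := by
      rw [Complex.norm_real, Real.norm_eq_abs, abs_of_nonneg (by positivity)]
      exact Real.rpow_le_one h0.le h1 (by linarith)
    have hxu : ‖x‖ * ‖(u : ℂ)‖ ≤ 1 := mul_le_one₀ hx1 (norm_nonneg _) hu1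
    have hu2 : ‖(u : ℂ)‖ ^ 2 ≤ 1 := pow_le_one₀ (norm_nonneg _) hu1
    have hx2 : ‖x‖ ^ 2 ≤ 1 := pow_le_one₀ (norm_nonneg _) hx1
    have hxu2 : ‖x‖ * ‖(u : ℂ)‖ ^ 2 ≤ 1 := mul_le_one₀ hx1 (by positivity) hu2
    have hxxu2 : ‖x‖ ^ 2 * ‖(u : ℂ)‖ ^ 2 ≤ 1 := mul_le_one₀ hx2 (by positivity) hu2
    have he : ‖Complex.exp (4 * x * (u : ℂ) / 3 + x ^ 2 * (u : ℂ) ^ 2 / 3)‖ ≤ Real.exp 2 := by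
      refine (Complex.norm_exp_le_exp_norm _).trans (Real.exp_le_exp.2 ?_)
      refine (norm_add_le _ _).trans ?_
      simp only [norm_mul, norm_div, norm_pow, RCLike.norm_ofNat]
      linarith
    have hl : ‖4 * (u : ℂ) / 3 + 2 * x * (u : ℂ) ^ 2 / 3‖ ≤ 2 := by
      refine (norm_add_le _ _).trans ?_
      simp only [norm_mul, norm_div, norm_pow, RCLike.norm_ofNat]
      linarith
    rw [norm_mul, norm_mul]
    calc _ ≤ 1 * (Real.exp 2 * 2) := by gcongr
      _ = _ := one_mul _
  · exact intervalIntegrable_const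
  · refine Filter.Eventually.of_forall fun u hu x hx => ?_
    refine HasDerivAt.const_mul _ (HasDerivAt.cexp ?_)
    have h1 := (((hasDerivAt_id x).const_mul 4).mul_const (u : ℂ)).div_const 3
    have h2 := (((hasDerivAt_id x).pow 2).mul_const ((u : ℂ) ^ 2)).div_const 3
    refine (h1.add h2).congr_deriv ?_
    simp

theorem aux_ftc (γ : ℝ) (hγ : 1 ≤ γ) (z : ℂ) :
    z * (∫ u in (0:ℝ)..1, ((u ^ (γ - 1) : ℝ) : ℂ) *
      (Complex.exp (4 * z * (u : ℂ) / 3 + z ^ 2 * (u : ℂ) ^ 2 / 3) *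
        (4 * (u : ℂ) / 3 + 2 * z * (u : ℂ) ^ 2 / 3))) + γ * Ifun γ z
      = Complex.exp (4 * z / 3 + z ^ 2 / 3) := by
  have hc : Continuous (fun u : ℝ => u ^ (γ - 1)) :=
    Real.continuous_rpow_const (by linarith)
  have hcc : Continuous (fun u : ℝ => ((u ^ (γ - 1) : ℝ) : ℂ)) :=
    Complex.continuous_ofReal.comp hc
  have hF := intervalIntegral.integral_eq_sub_of_hasDerivAt (a := 0) (b := 1)
    (f := fun u : ℝ => ((u ^ γ : ℝ) : ℂ) *
      Complex.exp (4 * z * (u : ℂ) / 3 + z ^ 2 * (u : ℂ) ^ 2 / 3))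
    (f' := fun u : ℝ => z * (((u ^ (γ - 1) : ℝ) : ℂ) *
      (Complex.exp (4 * z * (u : ℂ) / 3 + z ^ 2 * (u : ℂ) ^ 2 / 3) *
        (4 * (u : ℂ) / 3 + 2 * z * (u : ℂ) ^ 2 / 3))) + γ * (((u ^ (γ - 1) : ℝ) : ℂ) *
      Complex.exp (4 * z * (u : ℂ) / 3 + z ^ 2 * (u : ℂ) ^ 2 / 3))) ?_ ?_
  · rw [intervalIntegral.integral_add, intervalIntegral.integral_const_mul,
      intervalIntegral.integral_const_mul] at hF
    · rw [Ifun, hF]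
      simp [Real.zero_rpow (by linarith : γ ≠ 0)]
    · refine Continuous.intervalIntegrable ?_ _ _
      exact continuous_const.mul (hcc.mul (by fun_prop))
    · refine Continuous.intervalIntegrable ?_ _ _
      exact continuous_const.mul (hcc.mul (by fun_prop))
  · intro u hu
    rw [uIcc_of_le zero_le_one] at hu
    have hr : HasDerivAt (fun u : ℝ => ((u ^ γ : ℝ) : ℂ)) ((γ * u ^ (γ - 1) : ℝ) : ℂ) u :=
      (Real.hasDerivAt_rpow_const (Or.inr hγ)).ofReal_comp
    have hid : HasDerivAt (fun u : ℝ => (u : ℂ)) 1 u := Complex.ofRealCLM.hasDerivAt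
    have h1 := (hid.const_mul (4 * z)).div_const 3
    have h2 := ((hid.pow 2).const_mul (z ^ 2)).div_const 3
    refine (hr.mul (h1.add h2).cexp).congr_deriv ?_
    have hu' : ((u ^ γ : ℝ) : ℂ) = ((u ^ (γ - 1) : ℝ) : ℂ) * u := by
      rw [← Complex.ofReal_mul]
      congr 1
      rcases hu.1.eq_or_lt with h | h
      · rw [← h, Real.zero_rpow (by linarith), mul_zero]
      · rw [Real.rpow_sub_one h.ne']; field_simp
    simp only [hu', Pi.add_apply, Pi.pow_apply]
    push_cast
    ring
  · refine Continuous.intervalIntegrable ?_ _ _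
    exact (continuous_const.mul (hcc.mul (by fun_prop))).add
      (continuous_const.mul (hcc.mul (by fun_prop)))

/-- `q` solves the Briot–Bouquet equation
`q(z) + z q'(z)/(q(z)+γ-1) = 1 + 4z/3 + 2z²/3` wherever `I(z) ≠ 0`. -/
theorem stmt9 (γ : ℝ) (hγ : 1 ≤ γ) :
    ∀ z ∈ ball (0 : ℂ) 1, Ifun γ z ≠ 0 →
      qFun γ z + (γ : ℂ) - 1 ≠ 0 ∧
      qFun γ z + z * deriv (qFun γ) z / (qFun γ z + (γ : ℂ) - 1)
        = 1 + 4 * z / 3 + 2 * z ^ 2 / 3 := by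
  intro z hz hI
  have hq : qFun γ z + (γ : ℂ) - 1 = Complex.exp (4 * z / 3 + z ^ 2 / 3) / Ifun γ z := by
    rw [qFun]; ring
  have hE := Complex.exp_ne_zero (4 * z / 3 + z ^ 2 / 3)
  refine ⟨by rw [hq]; exact div_ne_zero hE hI, ?_⟩
  have hd := aux_hasDeriv γ hγ z hz
  have hf := aux_ftc γ hγ z
  set J := ∫ u in (0:ℝ)..1, ((u ^ (γ - 1) : ℝ) : ℂ) *
      (Complex.exp (4 * z * (u : ℂ) / 3 + z ^ 2 * (u : ℂ) ^ 2 / 3) *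
        (4 * (u : ℂ) / 3 + 2 * z * (u : ℂ) ^ 2 / 3)) with hJ
  have he : HasDerivAt (fun z : ℂ => Complex.exp (4 * z / 3 + z ^ 2 / 3))
      (Complex.exp (4 * z / 3 + z ^ 2 / 3) * (4 / 3 + 2 * z / 3)) z := by
    refine HasDerivAt.cexp ?_
    have h1 := ((hasDerivAt_id z).const_mul 4).div_const 3
    have h2 := ((hasDerivAt_id z).pow 2).div_const 3
    refine (h1.add h2).congr_deriv ?_
    simp
  have hqd : deriv (qFun γ) z = _ := (((he.div hd hI).sub_const (γ : ℂ)).add_const 1).deriv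
  rw [hq, hqd, qFun]
  generalize Complex.exp (4 * z / 3 + z ^ 2 / 3) = E at *
  generalize Ifun γ z = I at *
  field_simp
  linear_combination (-3 : ℂ) * hf
end

section
/- (Hallenbeck–Ruscheweyh lemma, as used in the paper) Let h be analytic on 𝔻 with h(0) = 1, injective on 𝔻 and with convex image h(𝔻), and let φ be analytic on 𝔻 with φ(0) = 1. Let μ be a complex number with Re μ > 0. If φ(z) + z·φ′(z)/μ ≺ h(z), then φ ≺ h̃ and h̃ ≺ h, where h̃(z) = μ ∫₀¹ u^{μ−1} h(uz) du (equivalently h̃(z) = (μ/z^μ) ∫₀^z t^{μ−1} h(t) dt). -/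
open Complex Metric Set

open Filter Topology in
lemma aux_inverse {g : ℂ → ℂ} (hg : AnalyticOnNhd ℂ g (ball 0 1)) (hinj : InjOn g (ball 0 1)) :
    IsOpen (g '' ball 0 1) ∧ (∀ z ∈ ball (0:ℂ) 1, deriv g z ≠ 0) ∧
    ∃ k : ℂ → ℂ, (∀ z ∈ ball (0:ℂ) 1, k (g z) = z) ∧ AnalyticOnNhd ℂ k (g '' ball 0 1) := by
  have hopen : ∀ s ⊆ ball (0:ℂ) 1, IsOpen s → IsOpen (g '' s) := by
    rcases hg.is_constant_or_isOpen (convex_ball 0 1).isPreconnected with ⟨w, hw⟩ | h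
    · exfalso
      have h0 : (0:ℂ) ∈ ball (0:ℂ) 1 := by simp
      have h1 : (1/2:ℂ) ∈ ball (0:ℂ) 1 := by simp; norm_num
      have := hinj h0 h1 ((hw _ h0).trans (hw _ h1).symm)
      norm_num at this
    · exact h
  have hV : IsOpen (g '' ball 0 1) := hopen _ subset_rfl isOpen_ball
  set k := Function.invFunOn g (ball (0:ℂ) 1) with hk
  have hkl : ∀ z ∈ ball (0:ℂ) 1, k (g z) = z := fun z hz => hinj.leftInvOn_invFunOn hz
  have hkr : ∀ w ∈ g '' ball (0:ℂ) 1, g (k w) = w := by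
    rintro w ⟨z, hz, rfl⟩; rw [hkl z hz]
  have hkm : ∀ w ∈ g '' ball (0:ℂ) 1, k w ∈ ball (0:ℂ) 1 := by
    rintro w ⟨z, hz, rfl⟩; rwa [hkl z hz]
  have hkc : ∀ w ∈ g '' ball (0:ℂ) 1, ContinuousAt k w := by
    rintro w ⟨z, hz, rfl⟩
    intro U hU
    rw [hkl z hz] at hU
    obtain ⟨O, hOU, hO, hzO⟩ := _root_.mem_nhds_iff.1 hU
    have h1 := (hopen (O ∩ ball 0 1) inter_subset_right (hO.inter isOpen_ball)).mem_nhds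
      (mem_image_of_mem g ⟨hzO, hz⟩)
    rw [Filter.mem_map]
    filter_upwards [h1]
    rintro _ ⟨y, ⟨hy, hy1⟩, rfl⟩
    simp only [mem_preimage, hkl y hy1]
    exact hOU hy
  have hkd : ∀ w ∈ g '' ball (0:ℂ) 1, deriv g (k w) ≠ 0 → DifferentiableAt ℂ k w := by
    intro w hw hne
    have h1 : HasDerivAt g (deriv g (k w)) (k w) :=
      (hg _ (hkm w hw)).differentiableAt.hasDerivAt
    exact (HasDerivAt.of_local_left_inverse (hkc w hw) h1 hne
      (by filter_upwards [hV.mem_nhds hw] with y hy using hkr y hy)).differentiableAt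
  have hka : AnalyticOnNhd ℂ k (g '' ball 0 1) := by
    rintro w ⟨z, hz, rfl⟩
    have hw := mem_image_of_mem g hz
    apply Complex.analyticAt_of_differentiable_on_punctured_nhds_of_continuousAt _ (hkc _ hw)
    rcases (hg z hz).deriv.eventually_eq_zero_or_eventually_ne_zero with h | h
    · exfalso
      obtain ⟨ε, hε, hb⟩ := Metric.eventually_nhds_iff_ball.1 (h.and (isOpen_ball.mem_nhds hz))
      have hc : ∀ y ∈ ball z ε, g y = g z := by
        intro y hy
        refine isOpen_ball.is_const_of_deriv_eq_zero (convex_ball z ε).isPreconnected ?_ ?_ hy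
          (mem_ball_self hε)
        · exact fun y hy => (hg y (hb y hy).2).differentiableAt.differentiableWithinAt
        · intro y hy; exact (hb y hy).1
      have hy : z + (ε/2 : ℝ) ∈ ball z ε := by
        simp [abs_of_pos hε, hε]
      have := hinj (hb _ hy).2 hz (hc _ hy)
      simp at this
      exact hε.ne' this
    · have hT : Tendsto k (𝓝[≠] (g z)) (𝓝[≠] z) := by
        rw [tendsto_nhdsWithin_iff]
        constructor
        · have := (hkc _ hw).tendsto
          rw [hkl z hz] at this
          exact this.mono_left nhdsWithin_le_nhds
        · filter_upwards [self_mem_nhdsWithin, nhdsWithin_le_nhds (hV.mem_nhds hw)] with y hy hy2 hc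
          apply hy
          rw [mem_singleton_iff] at hc ⊢
          rw [← hkr y hy2, hc]
      filter_upwards [hT.eventually h, nhdsWithin_le_nhds (hV.mem_nhds hw)] with y hy hy2
      exact hkd y hy2 hy
  refine ⟨hV, ?_, k, hkl, hka⟩
  intro z hz h0
  have h1 : HasDerivAt g (deriv g z) z := (hg z hz).differentiableAt.hasDerivAt
  have h2 := ((hka _ (mem_image_of_mem g hz)).differentiableAt.hasDerivAt).comp z h1
  have h3 : HasDerivAt (k ∘ g) 1 z := (hasDerivAt_id z).congr_of_eventuallyEq (by
    filter_upwards [isOpen_ball.mem_nhds hz] with y hy using hkl y hy)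
  have := h2.unique h3
  rw [h0] at this
  simp at this

/-- one-sided first derivative test -/
lemma aux_deriv_nonpos {v : ℝ → ℝ} {v' : ℝ} (hv : HasDerivAt v v' 0)
    (hle : ∀ t ∈ Ioo (0:ℝ) 1, v t ≤ v 0) : v' ≤ 0 := by
  have h := (hasDerivAt_iff_tendsto_slope.1 hv).mono_left
    (nhdsWithin_mono (0:ℝ) (show Ioi (0:ℝ) ⊆ {0}ᶜ from fun x hx => ne_of_gt hx))
  refine le_of_tendsto h ?_
  filter_upwards [Ioo_mem_nhdsGT (zero_lt_one : (0:ℝ) < 1)] with t ht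
  rw [slope_def_field]
  have := hle t ht
  exact div_nonpos_of_nonpos_of_nonneg (by linarith) (by linarith [ht.1])

/-- contact lemma -/
lemma aux_contact {F : ℂ → ℂ} {z : ℂ} (hF : DifferentiableAt ℂ F z)
    (hmin : ∀ w : ℂ, ‖w‖ ≤ ‖z‖ → (F z).re ≤ (F w).re) :
    ∃ σ : ℝ, σ ≤ 0 ∧ z * deriv F z = σ := by
  have key : ∀ c : ℂ, HasDerivAt (fun t : ℝ => (F (exp (c * t) * z)).re)
      ((deriv F z * (c * z)).re) 0 := by
    intro c
    have h1 : HasDerivAt (fun t : ℂ => exp (c * t) * z) (c * z) 0 := by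
      have := (((hasDerivAt_id (0:ℂ)).const_mul c).cexp).mul_const z
      simpa using this
    have h2 : HasDerivAt F (deriv F z) (exp (c * 0) * z) := by simpa using hF.hasDerivAt
    have h3 := (h2.comp (0:ℂ) h1)
    have := HasDerivAt.real_of_complex (z := 0) (e := fun t : ℂ => F (exp (c * t) * z))
      (by rw [ofReal_zero]; exact h3)
    simpa using this
  have hI := key I
  have hR := key (-1)
  have h1 : (deriv F z * (I * z)).re = 0 := by
    refine IsLocalMin.hasDerivAt_eq_zero (f := fun t : ℝ => (F (exp (I * t) * z)).re) ?_ hI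
    refine Filter.Eventually.of_forall fun t => ?_
    simp only [ofReal_zero, mul_zero, exp_zero, one_mul]
    apply hmin
    rw [norm_mul, mul_comm I, norm_exp_ofReal_mul_I, one_mul]
  have h2 : 0 ≤ (deriv F z * (-1 * z)).re := by
    have := aux_deriv_nonpos hR.neg (by
      intro t ht
      simp only [Pi.neg_apply, ofReal_zero, mul_zero, exp_zero, one_mul, neg_le_neg_iff]
      apply hmin
      rw [norm_mul, Complex.norm_exp]
      have : Real.exp ((-1 * (t:ℂ)).re) ≤ 1 := by
        apply Real.exp_le_one_iff.2
        simp [ht.1.le]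
      exact mul_le_of_le_one_left (norm_nonneg _) this)
    linarith
  refine ⟨(z * deriv F z).re, ?_, ?_⟩
  · simp only [mul_re, neg_mul, one_mul, neg_re, neg_im] at h2 ⊢
    linarith
  · apply Complex.ext
    · simp
    · simp only [mul_re, mul_im, I_re, I_im, ofReal_im] at h1 ⊢
      linarith

lemma aux_exists_contact {F : ℂ → ℂ} {R : ℝ} (hF : AnalyticOnNhd ℂ F (ball 0 R)) {z₁ : ℂ}
    (hz₁ : z₁ ∈ ball (0:ℂ) R) :
    ∃ z ∈ ball (0:ℂ) R, (F z).re ≤ (F z₁).re ∧ ∃ σ : ℝ, σ ≤ 0 ∧ z * deriv F z = σ := by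
  have hsub : closedBall (0:ℂ) ‖z₁‖ ⊆ ball 0 R := closedBall_subset_ball (by simpa using hz₁)
  obtain ⟨z, hz, hm⟩ := (isCompact_closedBall (0:ℂ) ‖z₁‖).exists_isMinOn
    (f := fun w => (F w).re) ⟨z₁, by simp⟩
    (continuous_re.comp_continuousOn (hF.continuousOn.mono hsub))
  refine ⟨z, hsub hz, hm (by simp), aux_contact (hF z (hsub hz)).differentiableAt ?_⟩
  intro w hw
  apply hm
  simp at hz ⊢
  linarith

/-- Lemma A -/
lemma aux_re_pos {F B : ℂ → ℂ} (hF : AnalyticOnNhd ℂ F (ball 0 1))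
    (hB : ∀ z ∈ ball (0:ℂ) 1, 0 < (B z).re)
    (h : ∀ z ∈ ball (0:ℂ) 1, 0 < (F z + z * deriv F z * B z).re) :
    ∀ z ∈ ball (0:ℂ) 1, 0 < (F z).re := by
  intro z₁ hz₁
  by_contra! hneg
  obtain ⟨z, hz, hle, σ, hσ, hd⟩ := aux_exists_contact hF hz₁
  have h1 := h z hz
  rw [hd, add_re, re_ofReal_mul] at h1
  have := mul_nonpos_of_nonpos_of_nonneg hσ (hB z hz).le
  linarith

/-- minimum principle for the real part -/
lemma aux_min {f : ℂ → ℂ} (hf : AnalyticOnNhd ℂ f (ball 0 1))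
    (h : ∀ z ∈ ball (0:ℂ) 1, z ≠ 0 → 0 ≤ (f z).re) (h0 : 0 < (f 0).re) :
    ∀ z ∈ ball (0:ℂ) 1, 0 < (f z).re := by
  intro z hz
  by_contra! hneg
  have hn : ∀ w ∈ ball (0:ℂ) 1, 0 ≤ (f w).re := by
    intro w hw
    by_cases hw0 : w = 0
    · rw [hw0]; exact h0.le
    · exact h w hw hw0
  have := Complex.norm_eqOn_of_isPreconnected_of_isMaxOn (f := fun w => exp (-f w))
    (convex_ball (0:ℂ) 1).isPreconnected isOpen_ball
    (fun w hw => ((hf w hw).differentiableAt.neg.cexp).differentiableWithinAt) hz (by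
      intro w hw
      simp only [Function.comp, mem_ofPred_eq, Complex.norm_exp, Real.exp_le_exp, neg_re]
      linarith [hn w hw])
  have h1 := this (show (0:ℂ) ∈ ball (0:ℂ) 1 by simp)
  simp only [Function.comp, Complex.norm_exp, Real.exp_eq_exp, neg_re, Function.const_apply] at h1
  linarith

open MeasureTheory intervalIntegral in
lemma aux_integral {h : ℂ → ℂ} {μ : ℂ} (hh : AnalyticOnNhd ℂ h (ball 0 1)) (hμ : 0 < μ.re) :
    AnalyticOnNhd ℂ (fun z => μ * ∫ u in (0:ℝ)..1, (u : ℂ) ^ (μ - 1) * h ((u : ℂ) * z)) (ball 0 1)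
    ∧ ∀ z ∈ ball (0:ℂ) 1, (fun z => μ * ∫ u in (0:ℝ)..1, (u : ℂ) ^ (μ - 1) * h ((u : ℂ) * z)) z
      + z * deriv (fun z => μ * ∫ u in (0:ℝ)..1, (u : ℂ) ^ (μ - 1) * h ((u : ℂ) * z)) z / μ = h z := by
  have hμ0 : μ ≠ 0 := by rintro rfl; simp at hμ
  have hin : ∀ z ∈ ball (0:ℂ) 1, ∀ u ∈ Icc (0:ℝ) 1, (u:ℂ) * z ∈ closedBall (0:ℂ) ‖z‖ := by
    intro z hz u hu
    simp only [mem_closedBall, dist_zero_right, norm_mul, norm_real, Real.norm_eq_abs, abs_of_nonneg hu.1]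
    exact mul_le_of_le_one_left (norm_nonneg _) hu.2
  have hin' : ∀ z ∈ ball (0:ℂ) 1, ∀ u ∈ Icc (0:ℝ) 1, (u:ℂ) * z ∈ ball (0:ℂ) 1 := by
    intro z hz u hu
    have := hin z hz u hu
    simp only [mem_closedBall, mem_ball, dist_zero_right] at *
    linarith
  have hcont : ∀ g : ℂ → ℂ, AnalyticOnNhd ℂ g (ball 0 1) → ∀ z ∈ ball (0:ℂ) 1,
      ContinuousOn (fun u : ℝ => g ((u:ℂ) * z)) (uIcc 0 1) := by
    intro g hg z hz
    rw [uIcc_of_le zero_le_one]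
    exact hg.continuousOn.comp (by fun_prop) (fun u hu => hin' z hz u hu)
  have hpow : IntervalIntegrable (fun u : ℝ => (u:ℂ) ^ (μ - 1)) volume 0 1 :=
    intervalIntegrable_cpow' (by simp; linarith)
  have hint : ∀ g : ℂ → ℂ, AnalyticOnNhd ℂ g (ball 0 1) → ∀ z ∈ ball (0:ℂ) 1,
      IntervalIntegrable (fun u : ℝ => (u:ℂ) ^ (μ - 1) * g ((u:ℂ) * z)) volume 0 1 :=
    fun g hg z hz => hpow.mul_continuousOn (hcont g hg z hz)
  have hder : ∀ z ∈ ball (0:ℂ) 1, IntervalIntegrable (fun u : ℝ => (u:ℂ) ^ (μ - 1) * (deriv h ((u:ℂ) * z) * u))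
      volume 0 1 ∧
      HasDerivAt (fun z => ∫ u in (0:ℝ)..1, (u : ℂ) ^ (μ - 1) * h ((u : ℂ) * z))
      (∫ u in (0:ℝ)..1, (u : ℂ) ^ (μ - 1) * (deriv h ((u : ℂ) * z) * u)) z := by
    intro z hz
    have hz' : ‖z‖ < 1 := by simpa using hz
    obtain ⟨r, hr1, hr2⟩ := exists_between hz'
    have hsub : closedBall (0:ℂ) r ⊆ ball 0 1 := closedBall_subset_ball hr2
    obtain ⟨C, hC⟩ := (isCompact_closedBall (0:ℂ) r).exists_bound_of_continuousOn
      (hh.deriv.continuousOn.mono hsub)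
    have hI : ∀ u ∈ uIoc (0:ℝ) 1, u ∈ Icc (0:ℝ) 1 := by
      intro u hu
      rw [uIoc_of_le zero_le_one] at hu
      exact ⟨hu.1.le, hu.2⟩
    refine intervalIntegral.hasDerivAt_integral_of_dominated_loc_of_deriv_le (𝕜 := ℂ)
      (F := fun z u => (u : ℂ) ^ (μ - 1) * h ((u : ℂ) * z))
      (F' := fun z u => (u : ℂ) ^ (μ - 1) * (deriv h ((u : ℂ) * z) * u)) (s := ball 0 r)
      (bound := fun u : ℝ => ‖(u:ℂ) ^ (μ - 1)‖ * C) (isOpen_ball.mem_nhds (by simpa using hr1))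
      ?_ (hint h hh z hz) ?_ ?_ ?_ ?_
    · filter_upwards [isOpen_ball.mem_nhds hz] with w hw
      exact (hint h hh w hw).def'.aestronglyMeasurable
    · have h1 := hpow.mul_continuousOn ((hcont _ hh.deriv z hz).mul
        (f := fun u : ℝ => deriv h ((u:ℂ) * z)) (g := fun u : ℝ => (u:ℂ)) (by fun_prop))
      exact h1.def'.aestronglyMeasurable
    · refine Filter.Eventually.of_forall fun u hu w hw => ?_
      have hu' := hI u hu
      rw [norm_mul]
      gcongr
      rw [norm_mul, norm_real, Real.norm_eq_abs, abs_of_nonneg hu'.1]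
      have h1 : (u:ℂ) * w ∈ closedBall (0:ℂ) r := by
        have := hin w (hsub (ball_subset_closedBall hw)) u hu'
        simp only [mem_closedBall, mem_ball, dist_zero_right] at *
        linarith
      exact (mul_le_of_le_one_right (norm_nonneg _) hu'.2).trans (hC _ h1)
    · exact (hpow.norm).mul_const C
    · refine Filter.Eventually.of_forall fun u hu w hw => ?_
      have h1 := hin' w (hsub (ball_subset_closedBall hw)) u (hI u hu)
      have h2 : HasDerivAt (fun x : ℂ => (u:ℂ) * x) (u:ℂ) w := by
        simpa using (hasDerivAt_id w).const_mul (u:ℂ)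
      exact (((hh _ h1).differentiableAt.hasDerivAt).comp w h2).const_mul _
  have hq : ∀ z ∈ ball (0:ℂ) 1, HasDerivAt
      (fun z => μ * ∫ u in (0:ℝ)..1, (u : ℂ) ^ (μ - 1) * h ((u : ℂ) * z))
      (μ * ∫ u in (0:ℝ)..1, (u : ℂ) ^ (μ - 1) * (deriv h ((u : ℂ) * z) * u)) z :=
    fun z hz => (hder z hz).2.const_mul μ
  refine ⟨DifferentiableOn.analyticOnNhd
    (fun z hz => (hq z hz).differentiableAt.differentiableWithinAt) isOpen_ball, ?_⟩
  intro z hz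
  rw [(hq z hz).deriv]
  have hftc : ∫ u in (0:ℝ)..1, (μ * ((u : ℂ) ^ (μ - 1) * h ((u : ℂ) * z)) +
      z * ((u : ℂ) ^ (μ - 1) * (deriv h ((u : ℂ) * z) * u))) =
      ((1:ℝ):ℂ) ^ μ * h (((1:ℝ):ℂ) * z) - ((0:ℝ):ℂ) ^ μ * h (((0:ℝ):ℂ) * z) := by
    refine integral_eq_sub_of_hasDerivAt_of_le (f := fun u : ℝ => (u:ℂ) ^ μ * h ((u:ℂ) * z))
      zero_le_one ?_ ?_ ?_
    · refine ContinuousOn.mul ?_ ?_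
      · exact (Complex.continuous_ofReal_cpow_const hμ).continuousOn
      · have := hcont h hh z hz
        rwa [uIcc_of_le zero_le_one] at this
    · intro u hu
      have hu0 : (u:ℂ) ≠ 0 := by exact_mod_cast hu.1.ne'
      have h1 := hin' z hz u ⟨hu.1.le, hu.2.le⟩
      have h2 : HasDerivAt (fun x : ℂ => x * z) z (u:ℂ) := by
        simpa using (hasDerivAt_id (u:ℂ)).mul_const z
      have h3 := ((hh _ h1).differentiableAt.hasDerivAt).comp (u:ℂ) h2
      have h4 : HasDerivAt (fun x : ℂ => x ^ μ) (μ * (u:ℂ) ^ (μ - 1)) (u:ℂ) := by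
        simpa using (hasDerivAt_id (u:ℂ)).cpow_const (c := μ) (Or.inl (by simpa using hu.1))
      have h5 := (h4.mul h3).comp_ofReal
      refine h5.congr_deriv ?_
      have h6 : (u:ℂ) ^ μ = (u:ℂ) ^ (μ - 1) * u := by
        rw [Complex.cpow_sub _ _ hu0, cpow_one, div_mul_cancel₀ _ hu0]
      simp only [Function.comp]
      rw [h6]
      ring
    · exact ((hint h hh z hz).const_mul μ).add ((hder z hz).1.const_mul z)
  rw [intervalIntegral.integral_add ((hint h hh z hz).const_mul μ) ((hder z hz).1.const_mul z),
    intervalIntegral.integral_const_mul, intervalIntegral.integral_const_mul] at hftc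
  simp only [ofReal_one, one_cpow, one_mul, ofReal_zero, zero_cpow hμ0, zero_mul, sub_zero] at hftc
  rw [← hftc, mul_left_comm z μ, mul_div_cancel_left₀ _ hμ0]

lemma aux_mul_mem {ζ z : ℂ} (hζ : ‖ζ‖ ≤ 1) (hz : z ∈ ball (0:ℂ) 1) : ζ * z ∈ ball (0:ℂ) 1 := by
  simp only [mem_ball, dist_zero_right, norm_mul] at *
  nlinarith [norm_nonneg ζ, norm_nonneg z]

lemma aux_support {h : ℂ → ℂ} (hh : AnalyticOnNhd ℂ h (ball 0 1)) (hinj : InjOn h (ball 0 1))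
    (hconv : Convex ℝ (h '' ball 0 1)) {z ζ : ℂ} (hz : z ∈ ball (0:ℂ) 1) (hz0 : z ≠ 0)
    (hζ : ‖ζ‖ ≤ 1) : 0 ≤ ((h z - h (ζ * z)) / (z * deriv h z)).re := by
  obtain ⟨hV, hd, k, hkl, hka⟩ := aux_inverse hh hinj
  have hkm : ∀ w ∈ h '' ball (0:ℂ) 1, k w ∈ ball (0:ℂ) 1 := by
    rintro w ⟨z, hz, rfl⟩; rwa [hkl z hz]
  have hmem : ∀ t ∈ Ioo (0:ℝ) 1, ∀ w ∈ ball (0:ℂ) 1,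
      h w + t * (h (ζ * w) - h w) ∈ h '' ball 0 1 := by
    intro t ht w hw
    have := hconv (mem_image_of_mem h hw) (mem_image_of_mem h (aux_mul_mem hζ hw))
      (show 0 ≤ 1 - t by linarith [ht.2]) ht.1.le (by ring)
    convert this using 1
    simp only [real_smul, ofReal_sub, ofReal_one]
    ring
  have hle : ∀ t ∈ Ioo (0:ℝ) 1, ‖k (h z + t * (h (ζ * z) - h z))‖ ≤ ‖z‖ := by
    intro t ht
    refine Complex.norm_le_norm_of_mapsTo_ball
      (f := fun w => k (h w + t * (h (ζ * w) - h w))) (R := 1) ?_ ?_ ?_ ?_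
    · intro w hw
      have h1 : DifferentiableAt ℂ h w := (hh w hw).differentiableAt
      have h2 : DifferentiableAt ℂ (fun w => h (ζ * w)) w :=
        (hh _ (aux_mul_mem hζ hw)).differentiableAt.comp w (by fun_prop)
      have h3 : DifferentiableAt ℂ (fun w => h w + t * (h (ζ * w) - h w)) w :=
        h1.add ((h2.sub h1).const_mul (t:ℂ))
      exact ((hka _ (hmem t ht w hw)).differentiableAt.comp w h3).differentiableWithinAt
    · intro w hw; exact ball_subset_closedBall (hkm _ (hmem t ht w hw))
    · simp [hkl 0 (by simp)]
    · simpa using hz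
  have hkd : HasDerivAt k (deriv h z)⁻¹ (h z) := by
    have h1 := (hka _ (mem_image_of_mem h hz)).differentiableAt.hasDerivAt
    have h2 := h1.comp z (hh z hz).differentiableAt.hasDerivAt
    have h3 : HasDerivAt (k ∘ h) 1 z := (hasDerivAt_id z).congr_of_eventuallyEq (by
      filter_upwards [isOpen_ball.mem_nhds hz] with y hy using hkl y hy)
    have := h2.unique h3
    rwa [eq_inv_of_mul_eq_one_left this] at h1
  have h1 : HasDerivAt (fun t : ℂ => h z + t * (h (ζ * z) - h z)) (h (ζ * z) - h z) 0 := by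
    simpa using ((hasDerivAt_id (0:ℂ)).mul_const (h (ζ * z) - h z)).const_add (h z)
  have hkd' : HasDerivAt k (deriv h z)⁻¹ (h z + 0 * (h (ζ * z) - h z)) := by simpa using hkd
  have h2 := ((hkd'.comp (0:ℂ) h1)).const_mul (z⁻¹)
  have h3 := HasDerivAt.real_of_complex (z := 0)
    (e := fun t : ℂ => z⁻¹ * k (h z + t * (h (ζ * z) - h z))) (by rw [ofReal_zero]; exact h2)
  have h4 := aux_deriv_nonpos h3 (by
    intro t ht
    simp only [ofReal_zero, zero_mul, add_zero, hkl z hz, inv_mul_cancel₀ hz0, one_re]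
    refine (Complex.re_le_norm _).trans ?_
    rw [norm_mul, norm_inv, inv_mul_le_iff₀ (by simpa using hz0), mul_one]
    exact hle t ht)
  have h5 : (h z - h (ζ * z)) / (z * deriv h z)
      = -(z⁻¹ * ((deriv h z)⁻¹ * (h (ζ * z) - h z))) := by
    rw [div_eq_mul_inv, mul_inv]; ring
  rw [h5, neg_re]
  linarith

lemma aux_diff {g : ℂ → ℂ} (hg : AnalyticOnNhd ℂ g (ball 0 1)) {ζ : ℂ} (hζ : ‖ζ‖ ≤ 1) :
    ∃ Δ : ℂ → ℂ, AnalyticOnNhd ℂ Δ (ball 0 1) ∧ (∀ z, z * Δ z = g z - g (ζ * z)) ∧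
      Δ 0 = (1 - ζ) * deriv g 0 := by
  have hE : AnalyticOnNhd ℂ (fun z => g z - g (ζ * z)) (ball 0 1) := by
    intro z hz
    refine (hg z hz).sub ?_
    exact AnalyticAt.fun_comp (g := g) (f := fun z => ζ * z) (hg _ (aux_mul_mem hζ hz)) (by fun_prop)
  refine ⟨dslope (fun z => g z - g (ζ * z)) 0, ?_, ?_, ?_⟩
  · refine DifferentiableOn.analyticOnNhd ?_ isOpen_ball
    exact (Complex.differentiableOn_dslope (isOpen_ball.mem_nhds (by simp))).2 hE.differentiableOn
  · intro z
    have := sub_smul_dslope (fun z => g z - g (ζ * z)) 0 z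
    simpa using this
  · rw [dslope_same]
    have h0 : HasDerivAt g (deriv g 0) 0 := (hg 0 (by simp)).differentiableAt.hasDerivAt
    have h1 : HasDerivAt g (deriv g 0) (ζ * 0) := by simpa using h0
    have h2 : HasDerivAt (fun z : ℂ => ζ * z) ζ 0 := by
      simpa using (hasDerivAt_id (0:ℂ)).const_mul ζ
    have h3 : HasDerivAt (fun z => g z - g (ζ * z)) (deriv g 0 - deriv g 0 * ζ) 0 :=
      h0.sub (h1.comp (0:ℂ) h2)
    rw [h3.deriv]
    ring

lemma aux_one_sub_re {ζ : ℂ} (hζ : ‖ζ‖ ≤ 1) (h1 : ζ ≠ 1) : 0 < (1 - ζ).re := by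
  rw [sub_re, one_re, sub_pos]
  by_contra! h
  apply h1
  have h2 := Complex.sq_norm ζ
  rw [normSq_apply] at h2
  have h3 : ζ.im * ζ.im ≤ 0 := by nlinarith [norm_nonneg ζ]
  have h4 : ζ.im = 0 := by nlinarith
  have h5 : ζ.re = 1 := le_antisymm ((re_le_norm ζ).trans hζ) h
  apply Complex.ext <;> simp [h4, h5]

/-- strict support inequality, including an analytic extension at zero -/
lemma aux_support_strict {h : ℂ → ℂ} (hh : AnalyticOnNhd ℂ h (ball 0 1))
    (hinj : InjOn h (ball 0 1)) (hconv : Convex ℝ (h '' ball 0 1)) {ζ : ℂ}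
    (hζ : ‖ζ‖ ≤ 1) (hζ1 : ζ ≠ 1) {Δ : ℂ → ℂ} (hΔ : AnalyticOnNhd ℂ Δ (ball 0 1))
    (hΔ1 : ∀ z, z * Δ z = h z - h (ζ * z)) (hΔ0 : Δ 0 = (1 - ζ) * deriv h 0) :
    ∀ z ∈ ball (0:ℂ) 1, 0 < (Δ z / deriv h z).re := by
  obtain ⟨hV, hd, -⟩ := aux_inverse hh hinj
  refine aux_min (fun z hz => (hΔ z hz).div (hh z hz).deriv (hd z hz)) ?_ ?_
  · intro z hz hz0
    have := aux_support hh hinj hconv hz hz0 hζ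
    rwa [← hΔ1, mul_div_mul_left _ _ hz0] at this
  · rw [hΔ0, mul_div_cancel_right₀ _ (hd 0 (by simp))]
    exact aux_one_sub_re hζ hζ1

lemma aux_support_lt {h : ℂ → ℂ} (hh : AnalyticOnNhd ℂ h (ball 0 1))
    (hinj : InjOn h (ball 0 1)) (hconv : Convex ℝ (h '' ball 0 1)) {z w : ℂ}
    (hz : z ∈ ball (0:ℂ) 1) (hw : ‖w‖ < ‖z‖) : 0 < ((h z - h w) / (z * deriv h z)).re := by
  have hz0 : z ≠ 0 := by rintro rfl; simp at hw; linarith [norm_nonneg w]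
  have hzp : 0 < ‖z‖ := by simpa using hz0
  have hζ : ‖w / z‖ < 1 := by rw [norm_div, div_lt_one hzp]; exact hw
  obtain ⟨Δ, h1, h2, h3⟩ := aux_diff hh hζ.le
  have := aux_support_strict hh hinj hconv hζ.le (by intro h; rw [h] at hζ; simp at hζ) h1 h2 h3 z hz
  have h4 := h2 z
  rw [div_mul_cancel₀ _ hz0] at h4
  rwa [← h4, mul_div_mul_left _ _ hz0]

lemma aux_support_le {h : ℂ → ℂ} (hh : AnalyticOnNhd ℂ h (ball 0 1))
    (hinj : InjOn h (ball 0 1)) (hconv : Convex ℝ (h '' ball 0 1)) {z w : ℂ}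
    (hz : z ∈ ball (0:ℂ) 1) (hz0 : z ≠ 0) (hw : ‖w‖ ≤ ‖z‖) :
    0 ≤ ((h z - h w) / (z * deriv h z)).re := by
  have hzp : 0 < ‖z‖ := by simpa using hz0
  have hζ : ‖w / z‖ ≤ 1 := by rw [norm_div, div_le_one hzp]; exact hw
  have := aux_support hh hinj hconv hz hz0 hζ
  rwa [div_mul_cancel₀ _ hz0] at this

lemma aux_second {h : ℂ → ℂ} (hh : AnalyticOnNhd ℂ h (ball 0 1))
    (hinj : InjOn h (ball 0 1)) (hconv : Convex ℝ (h '' ball 0 1)) {z : ℂ}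
    (hz : z ∈ ball (0:ℂ) 1) : 0 ≤ (1 + z * deriv (deriv h) z / deriv h z).re := by
  obtain ⟨hV, hd, -⟩ := aux_inverse hh hinj
  have hdz := hd z hz
  by_cases hz0 : z = 0
  · simp [hz0]
  have hm : ∀ t : ℝ, exp (t * I) * z ∈ ball (0:ℂ) 1 := fun t =>
    aux_mul_mem (norm_exp_ofReal_mul_I t).le hz
  have he : ∀ t : ℝ, HasDerivAt (fun s : ℂ => exp (s * I) * z) (exp (t * I) * I * z) t := by
    intro t
    simpa using (((hasDerivAt_id (t:ℂ)).mul_const I).cexp).mul_const z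
  set v : ℝ → ℝ := fun t => ((h z - h (exp (t * I) * z)) / (z * deriv h z)).re with hv
  set v1 : ℝ → ℝ := fun t => (-(deriv h (exp (t * I) * z) * (exp (t * I) * I * z)) / (z * deriv h z)).re with hv1
  have hv' : ∀ t, HasDerivAt v (v1 t) t := by
    intro t
    have h1 := (((hh _ (hm t)).differentiableAt.hasDerivAt).comp (t:ℂ) (he t)).const_sub (h z)
    exact HasDerivAt.real_of_complex (h1.div_const (z * deriv h z))
  have hdv : deriv v = v1 := funext fun t => (hv' t).deriv
  have hv1' : HasDerivAt v1 ((1 + z * deriv (deriv h) z / deriv h z).re) 0 := by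
    have h1 := ((hh.deriv _ (hm 0)).differentiableAt.hasDerivAt).comp ((0:ℝ):ℂ) (he 0)
    have h2 : HasDerivAt (fun s : ℂ => exp (s * I) * I * z) (exp ((0:ℝ) * I) * I * I * z) ((0:ℝ):ℂ) := by
      simpa using ((((hasDerivAt_id ((0:ℝ):ℂ)).mul_const I).cexp).mul_const I).mul_const z
    have h3 := HasDerivAt.real_of_complex ((h1.mul h2).neg.div_const (z * deriv h z))
    refine h3.congr_deriv ?_
    congr 1
    simp only [ofReal_zero, zero_mul, exp_zero, one_mul, Function.comp]
    rw [I_mul_I]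
    field_simp
    linear_combination (-z * deriv (deriv h) z) * I_mul_I
  by_contra! hneg
  have hv00 : v 0 = 0 := by simp [hv]
  have hmin : ∀ t, 0 ≤ v t := fun t =>
    aux_support hh hinj hconv hz hz0 (norm_exp_ofReal_mul_I t).le
  have hd0 : deriv v 0 = 0 := IsLocalMin.deriv_eq_zero
    (Filter.Eventually.of_forall fun t => by rw [hv00]; exact hmin t)
  have hmax := isLocalMax_of_deriv_deriv_neg (f := v) (x₀ := 0)
    (by rw [hdv, hv1'.deriv]; exact hneg) hd0 (hv' 0).continuousAt
  have hz' : v =ᶠ[nhds 0] fun _ => 0 := by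
    filter_upwards [hmax] with t ht
    exact le_antisymm (hv00 ▸ ht) (hmin t)
  have h6 := hz'.deriv.deriv_eq
  rw [hdv, hv1'.deriv] at h6
  simp at h6 hneg
  linarith

lemma aux_ode_deriv {q h : ℂ → ℂ} {μ : ℂ} (hq : AnalyticOnNhd ℂ q (ball 0 1))
    (hode : ∀ z ∈ ball (0:ℂ) 1, q z + z * deriv q z / μ = h z) :
    ∀ z ∈ ball (0:ℂ) 1, deriv h z = deriv q z + (deriv q z + z * deriv (deriv q) z) / μ := by
  intro z hz
  have h1 : HasDerivAt q (deriv q z) z := (hq z hz).differentiableAt.hasDerivAt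
  have h2 : HasDerivAt (deriv q) (deriv (deriv q) z) z :=
    (hq z hz).deriv.differentiableAt.hasDerivAt
  have h3 := h1.add (((hasDerivAt_id z).mul h2).div_const μ)
  have h4 : HasDerivAt h _ z := h3.congr_of_eventuallyEq (by
    filter_upwards [isOpen_ball.mem_nhds hz] with y hy
    simp [← hode y hy])
  rw [h4.deriv]
  simp

lemma aux_q_inj {q h : ℂ → ℂ} {μ : ℂ} (hh : AnalyticOnNhd ℂ h (ball 0 1))
    (hinj : InjOn h (ball 0 1)) (hconv : Convex ℝ (h '' ball 0 1)) (hμ : 0 < μ.re)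
    (hq : AnalyticOnNhd ℂ q (ball 0 1))
    (hode : ∀ z ∈ ball (0:ℂ) 1, q z + z * deriv q z / μ = h z) : InjOn q (ball 0 1) := by
  have hμ0 : μ ≠ 0 := by rintro rfl; simp at hμ
  have hode' := aux_ode_deriv hq hode
  obtain ⟨-, hd, -⟩ := aux_inverse hh hinj
  have hKa : AnalyticOnNhd ℂ (fun z => deriv q z / (μ * deriv h z)) (ball 0 1) := fun z hz =>
    (hq z hz).deriv.div (analyticAt_const.mul (hh z hz).deriv) (mul_ne_zero hμ0 (hd z hz))
  have hK : ∀ z ∈ ball (0:ℂ) 1, 0 < (deriv q z / (μ * deriv h z)).re := by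
    intro z₁ hz₁
    by_contra! hneg
    obtain ⟨z, hz, hle, σ, hσ, hder⟩ := aux_exists_contact hKa hz₁
    have h0 := hd z hz
    have hP := aux_second hh hinj hconv hz
    set P := 1 + z * deriv (deriv h) z / deriv h z with hPd
    have h1 : HasDerivAt (fun z => deriv q z / (μ * deriv h z)) _ z :=
      ((hq z hz).deriv.differentiableAt.hasDerivAt).div
        (((hh z hz).deriv.differentiableAt.hasDerivAt).const_mul μ) (mul_ne_zero hμ0 h0)
    rw [h1.deriv] at hder
    have h2 := hode' z hz
    have h3 : (deriv q z / (μ * deriv h z)) * (μ + P) = 1 - σ := by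
      rw [← hder, hPd]
      field_simp
      field_simp at h2
      linear_combination -deriv h z * h2
    have hpos : 0 < (μ + P).re := by rw [add_re]; linarith
    have hne : μ + P ≠ 0 := by intro h; rw [h] at hpos; simp at hpos
    have h4 : deriv q z / (μ * deriv h z) = ((1 - σ : ℝ) : ℂ) * (μ + P)⁻¹ := by
      rw [← div_eq_mul_inv, eq_div_iff hne, h3]; push_cast; rfl
    have h5 : 0 < (deriv q z / (μ * deriv h z)).re := by
      rw [h4, re_ofReal_mul, inv_re]
      exact mul_pos (by linarith) (div_pos hpos (normSq_pos.2 hne))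
    linarith
  have hq0 : ∀ z ∈ ball (0:ℂ) 1, deriv q z ≠ 0 := by
    intro z hz h
    have := hK z hz
    simp [h] at this
  have key : ∀ z ∈ ball (0:ℂ) 1, ∀ ζ : ℂ, ‖ζ‖ ≤ 1 → z ≠ 0 → ζ ≠ 1 → q z ≠ q (ζ * z) := by
    intro z₁ hz₁ ζ hζ hz0 hζ1 heq
    obtain ⟨Δ, hΔa, hΔ1, hΔ0⟩ := aux_diff hq hζ
    obtain ⟨Γ, hΓa, hΓ1, hΓ0⟩ := aux_diff hh hζ
    have hS := aux_support_strict hh hinj hconv hζ hζ1 hΓa hΓ1 hΓ0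
    have hrel : ∀ z ∈ ball (0:ℂ) 1, Δ z + (Δ z + z * deriv Δ z) / μ = Γ z := by
      intro z hz
      by_cases hz0 : z = 0
      · subst hz0
        rw [hΓ0, hΔ0, hode' 0 hz]
        ring
      · have hζz := aux_mul_mem hζ hz
        have h1 : HasDerivAt (fun z => z * Δ z) _ z :=
          (hasDerivAt_id z).mul (hΔa z hz).differentiableAt.hasDerivAt
        have h2 : HasDerivAt (fun z : ℂ => ζ * z) ζ z := by
          simpa using (hasDerivAt_id z).const_mul ζ
        have h3 : HasDerivAt (fun z => q z - q (ζ * z)) _ z :=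
          ((hq z hz).differentiableAt.hasDerivAt).sub
            (((hq _ hζz).differentiableAt.hasDerivAt).comp z h2)
        simp only [hΔ1] at h1
        have h4 := h1.unique h3
        simp only [id, one_mul] at h4
        apply mul_left_cancel₀ hz0
        have e1 := hode z hz
        have e2 := hode _ hζz
        rw [hΓ1, ← e1, ← e2, h4, mul_add, hΔ1]
        ring
    have hF := aux_re_pos (F := fun z => Δ z / deriv q z)
      (B := fun z => deriv q z / (μ * deriv h z))
      (fun z hz => (hΔa z hz).div (hq z hz).deriv (hq0 z hz)) hK (by
        intro z hz
        have h0 := hd z hz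
        have h0' := hq0 z hz
        have h1 : HasDerivAt (fun z => Δ z / deriv q z) _ z :=
          ((hΔa z hz).differentiableAt.hasDerivAt).div
            ((hq z hz).deriv.differentiableAt.hasDerivAt) h0'
        rw [h1.deriv]
        have h2 := hode' z hz
        have h3 := hrel z hz
        convert hS z hz using 2
        field_simp at h2 h3 ⊢
        linear_combination Δ z * h2 + deriv q z * h3) z₁ hz₁
    have h5 : Δ z₁ = 0 := by
      have := hΔ1 z₁
      rw [heq, sub_self] at this
      exact (mul_eq_zero.1 this).resolve_left hz0
    simp [h5] at hF
  have key2 : ∀ z ∈ ball (0:ℂ) 1, ∀ w ∈ ball (0:ℂ) 1, ‖w‖ ≤ ‖z‖ → q z = q w → z = w := by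
    intro z hz w hw hle heq
    by_contra hne
    have hz0 : z ≠ 0 := by
      rintro rfl
      simp at hle
      exact hne hle.symm
    have hzp : 0 < ‖z‖ := by simpa using hz0
    refine key z hz (w / z) (by rw [norm_div, div_le_one hzp]; exact hle) hz0 ?_ ?_
    · intro h
      rw [div_eq_one_iff_eq hz0] at h
      exact hne h.symm
    · rw [div_mul_cancel₀ _ hz0]; exact heq
  intro z hz w hw heq
  rcases le_total ‖w‖ ‖z‖ with h | h
  · exact key2 z hz w hw h heq
  · exact (key2 w hw z hz h heq.symm).symm

lemma aux_q_mem {q h : ℂ → ℂ} {μ : ℂ} (hV : IsOpen (h '' ball 0 1))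
    (hconv : Convex ℝ (h '' ball 0 1)) (hμ : 0 < μ.re)
    (hq : AnalyticOnNhd ℂ q (ball 0 1))
    (hode : ∀ z ∈ ball (0:ℂ) 1, q z + z * deriv q z / μ = h z) :
    ∀ z ∈ ball (0:ℂ) 1, q z ∈ h '' ball 0 1 := by
  have hμ0 : μ ≠ 0 := by rintro rfl; simp at hμ
  intro z₁ hz₁
  by_contra hn
  obtain ⟨f, hf⟩ := RCLike.geometric_hahn_banach_open_point (𝕜 := ℂ) hconv hV hn
  have hfe : ∀ w, f w = w * f 1 := by
    intro w
    have := f.map_smul w 1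
    simpa using this
  have := aux_re_pos (F := fun z => (q z₁ - q z) * f 1) (B := fun _ => μ⁻¹)
    (fun z hz => (analyticAt_const.sub (hq z hz)).mul analyticAt_const)
    (fun z _ => by rw [inv_re]; exact div_pos hμ (normSq_pos.2 hμ0)) (by
      intro z hz
      have h1 : HasDerivAt (fun z => (q z₁ - q z) * f 1) _ z :=
        (((hq z hz).differentiableAt.hasDerivAt).const_sub (q z₁)).mul_const (f 1)
      rw [h1.deriv]
      have h2 := hf _ (mem_image_of_mem h hz)
      rw [hfe, hfe (q z₁), ← hode z hz] at h2
      have h3 : (q z₁ - q z) * f 1 + z * (-deriv q z * f 1) * μ⁻¹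
        = q z₁ * f 1 - (q z + z * deriv q z / μ) * f 1 := by rw [div_eq_mul_inv]; ring
      rw [h3, sub_re, sub_pos]
      exact h2) z₁ hz₁
  simp at this

lemma aux_step {q h φ ω η k : ℂ → ℂ} {μ : ℂ} {R : ℝ} (hR0 : 0 < R) (hR : R ≤ 1)
    (hh : AnalyticOnNhd ℂ h (ball 0 1))
    (hinj : InjOn h (ball 0 1)) (hconv : Convex ℝ (h '' ball 0 1)) (hμ : 0 < μ.re)
    (hq : AnalyticOnNhd ℂ q (ball 0 1))
    (hode : ∀ z ∈ ball (0:ℂ) 1, q z + z * deriv q z / μ = h z)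
    (hkl : ∀ z ∈ ball (0:ℂ) 1, k (q z) = z) (hka : AnalyticOnNhd ℂ k (q '' ball 0 1))
    (hη : ∀ z ∈ ball (0:ℂ) 1, ‖η z‖ ≤ ‖z‖) (hqη : ∀ z ∈ ball (0:ℂ) 1, q z = h (η z))
    (hφ : AnalyticOnNhd ℂ φ (ball 0 1)) (hφ0 : φ 0 = q 0)
    (hω : AnalyticOnNhd ℂ ω (ball 0 1)) (hω0 : ω 0 = 0)
    (hωm : ∀ z ∈ ball (0:ℂ) 1, ω z ∈ ball (0:ℂ) 1)
    (hsub : ∀ z ∈ ball (0:ℂ) 1, φ z + z * deriv φ z / μ = h (ω z))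
    (hmem : ∀ z ∈ ball (0:ℂ) R, φ z ∈ q '' ball 0 1) :
    ∀ z ∈ ball (0:ℂ) R, ‖k (φ z)‖ ≤ ‖z‖ := by
  have hμ0 : μ ≠ 0 := by rintro rfl; simp at hμ
  have hRsub : ball (0:ℂ) R ⊆ ball 0 1 := ball_subset_ball hR
  have h0R : (0:ℂ) ∈ ball (0:ℂ) R := by simpa using hR0
  have h01 : (0:ℂ) ∈ ball (0:ℂ) 1 := by simp
  obtain ⟨-, hd, -⟩ := aux_inverse hh hinj
  have hωle : ∀ z ∈ ball (0:ℂ) 1, ‖ω z‖ ≤ ‖z‖ := by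
    intro z hz
    exact Complex.norm_le_norm_of_mapsTo_ball (R := 1) hω.differentiableOn
      (fun w hw => ball_subset_closedBall (hωm w hw)) hω0 (by simpa using hz)
  set ϑ : ℂ → ℂ := fun z => k (φ z) with hϑd
  have hϑa : AnalyticOnNhd ℂ ϑ (ball 0 R) := fun z hz =>
    AnalyticAt.fun_comp (hka _ (hmem z hz)) (hφ z (hRsub hz))
  have hϑ0 : ϑ 0 = 0 := by simp only [hϑd]; rw [hφ0, hkl 0 h01]
  have hϑm : ∀ z ∈ ball (0:ℂ) R, ϑ z ∈ ball (0:ℂ) 1 := by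
    intro z hz
    obtain ⟨y, hy, hy2⟩ := hmem z hz
    simp only [hϑd]
    rw [← hy2, hkl y hy]; exact hy
  have hqϑ : ∀ z ∈ ball (0:ℂ) R, φ z = q (ϑ z) := by
    intro z hz
    obtain ⟨y, hy, hy2⟩ := hmem z hz
    simp only [hϑd]
    rw [← hy2, hkl y hy]
  have hφd : ∀ z ∈ ball (0:ℂ) R, deriv φ z = deriv q (ϑ z) * deriv ϑ z := by
    intro z hz
    have h1 := ((hq _ (hϑm z hz)).differentiableAt.hasDerivAt).comp z
      (hϑa z hz).differentiableAt.hasDerivAt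
    have h2 : HasDerivAt φ _ z := h1.congr_of_eventuallyEq (by
      filter_upwards [isOpen_ball.mem_nhds hz] with y hy using hqϑ y hy)
    exact h2.deriv
  have hϑ1 : ‖deriv ϑ 0‖ ≤ 1 := by
    have e1 := aux_ode_deriv hφ hsub 0 h01
    have e2 := aux_ode_deriv hq hode 0 h01
    have e3 : HasDerivAt (fun z => h (ω z)) (deriv h 0 * deriv ω 0) 0 := by
      have h1 : HasDerivAt h (deriv h 0) (ω 0) := by
        rw [hω0]; exact (hh 0 h01).differentiableAt.hasDerivAt
      exact h1.comp 0 (hω 0 h01).differentiableAt.hasDerivAt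
    rw [e3.deriv, hφd 0 h0R, hϑ0] at e1
    have e4 : deriv h 0 * deriv ω 0 = deriv h 0 * deriv ϑ 0 := by
      rw [e1, e2]; ring
    rw [← mul_left_cancel₀ (hd 0 h01) e4]
    exact Complex.norm_deriv_le_one_of_mapsTo_ball (R := 1) hω.differentiableOn
      (fun w hw => by rw [hω0]; exact ball_subset_closedBall (hωm w hw)) (by norm_num)
  set G := dslope ϑ 0 with hG
  have hGa : AnalyticOnNhd ℂ G (ball 0 R) := DifferentiableOn.analyticOnNhd
    ((Complex.differentiableOn_dslope (isOpen_ball.mem_nhds h0R)).2 hϑa.differentiableOn)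
      isOpen_ball
  have hG1 : ∀ z, ϑ z = z * G z := by
    intro z
    have := sub_smul_dslope ϑ 0 z
    rw [hϑ0] at this
    simpa using this.symm
  have hG0 : G 0 = deriv ϑ 0 := dslope_same _ _
  suffices hGle : ∀ z ∈ ball (0:ℂ) R, ‖G z‖ ≤ 1 by
    intro z hz
    change ‖ϑ z‖ ≤ _
    rw [hG1, norm_mul]
    exact mul_le_of_le_one_right (norm_nonneg _) (hGle z hz)
  intro z₁ hz₁
  by_contra! hgt
  have hsub' : closedBall (0:ℂ) ‖z₁‖ ⊆ ball 0 R := closedBall_subset_ball (by simpa using hz₁)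
  obtain ⟨z, hz, hm⟩ := (isCompact_closedBall (0:ℂ) ‖z₁‖).exists_isMaxOn
    (f := fun w => ‖G w‖) ⟨z₁, by simp⟩ (hGa.continuousOn.mono hsub').norm
  have hzR := hsub' hz
  have hGz : 1 < ‖G z‖ := lt_of_lt_of_le hgt (hm (by simp))
  have hz0 : z ≠ 0 := by
    rintro rfl
    rw [hG0] at hGz
    linarith
  have hGn : G z ≠ 0 := by intro h; rw [h] at hGz; simp at hGz; linarith
  have hGd : HasDerivAt G (deriv G z) z := (hGa z hzR).differentiableAt.hasDerivAt
  obtain ⟨σ, hσ, hs⟩ := aux_contact (F := fun w => -((G z)⁻¹ * G w)) (z := z)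
    (hGd.const_mul _).neg.differentiableAt (by
      intro w hw
      rw [inv_mul_cancel₀ hGn, neg_re, neg_re, neg_le_neg_iff, one_re]
      refine (re_le_norm _).trans ?_
      rw [norm_mul, norm_inv, inv_mul_le_iff₀ (by linarith), mul_one]
      apply hm
      simp at hz ⊢
      linarith)
  have hs' : deriv (fun w => -((G z)⁻¹ * G w)) z = -((G z)⁻¹ * deriv G z) :=
    (hGd.const_mul _).neg.deriv
  rw [hs'] at hs
  have hGd2 : z * deriv G z = -σ * G z := by
    rw [← hs]; field_simp
  have hϑz : deriv ϑ z = G z + z * deriv G z := by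
    have h1 : HasDerivAt (fun z => z * G z) _ z := (hasDerivAt_id z).mul hGd
    simp only [← hG1] at h1
    have := h1.deriv
    simpa using this
  -- the point
  have hζ := hϑm z hzR
  have hζ0 : ϑ z ≠ 0 := by rw [hG1]; exact mul_ne_zero hz0 hGn
  have hlt : ‖z‖ < ‖ϑ z‖ := by
    rw [hG1, norm_mul]
    exact lt_mul_of_one_lt_right (by simpa using hz0) hGz
  have hz1 := hRsub hzR
  have e1 := hsub z hz1
  have e2 := hode _ hζ
  have e3 : h (ω z) = q (ϑ z) + ((1 - σ : ℝ):ℂ) * (h (ϑ z) - q (ϑ z)) := by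
    rw [← e1, ← e2, hφd z hzR, ← hqϑ z hzR, hϑz, hGd2, hG1 z]
    push_cast
    ring
  have t1 := aux_support_lt hh hinj hconv hζ ((hωle z hz1).trans_lt hlt)
  have t2 := aux_support_le hh hinj hconv hζ hζ0 (hη _ hζ)
  rw [← hqη _ hζ] at t2
  have e4 : (h (ϑ z) - h (ω z)) / (ϑ z * deriv h (ϑ z)) =
      (σ : ℂ) * ((h (ϑ z) - q (ϑ z)) / (ϑ z * deriv h (ϑ z))) := by
    rw [e3]; push_cast; ring
  rw [e4, re_ofReal_mul] at t1
  have := mul_nonpos_of_nonpos_of_nonneg hσ t2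
  linarith

theorem stmt10 (h φ : ℂ → ℂ) (μ : ℂ)
    (hh : AnalyticOnNhd ℂ h (ball 0 1)) (hh0 : h 0 = 1)
    (hinj : InjOn h (ball 0 1)) (hconv : Convex ℝ (h '' ball 0 1))
    (hφ : AnalyticOnNhd ℂ φ (ball 0 1)) (hφ0 : φ 0 = 1)
    (hμ : 0 < μ.re)
    (hsub : IsSubordinate (fun z => φ z + z * deriv φ z / μ) h) :
    IsSubordinate φ
        (fun z => μ * ∫ u in (0:ℝ)..1, (u : ℂ) ^ (μ - 1) * h ((u : ℂ) * z)) ∧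
      IsSubordinate
        (fun z => μ * ∫ u in (0:ℝ)..1, (u : ℂ) ^ (μ - 1) * h ((u : ℂ) * z)) h := by
  obtain ⟨hq, hode⟩ := aux_integral hh hμ
  generalize (fun z => μ * ∫ u in (0:ℝ)..1, (u : ℂ) ^ (μ - 1) * h ((u : ℂ) * z)) = q at *
  have h01 : (0:ℂ) ∈ ball (0:ℂ) 1 := by simp
  obtain ⟨ω, hω, hω0, hωm, hsub⟩ := hsub
  obtain ⟨hV, hd, kh, hkhl, hkha⟩ := aux_inverse hh hinj
  have hqinj := aux_q_inj hh hinj hconv hμ hq hode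
  obtain ⟨hW, hqd, k, hkl, hka⟩ := aux_inverse hq hqinj
  have hqm := aux_q_mem hV hconv hμ hq hode
  have hq0 : q 0 = 1 := by
    have := hode 0 h01
    simpa [hh0] using this
  have hηa : AnalyticOnNhd ℂ (fun z => kh (q z)) (ball 0 1) := fun z hz =>
    AnalyticAt.fun_comp (hkha _ (hqm z hz)) (hq z hz)
  have hη0 : kh (q 0) = 0 := by rw [hq0, ← hh0, hkhl 0 h01]
  have hηm : ∀ z ∈ ball (0:ℂ) 1, kh (q z) ∈ ball (0:ℂ) 1 := by
    intro z hz
    obtain ⟨y, hy, hy2⟩ := hqm z hz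
    rw [← hy2, hkhl y hy]; exact hy
  have hqη : ∀ z ∈ ball (0:ℂ) 1, q z = h (kh (q z)) := by
    intro z hz
    obtain ⟨y, hy, hy2⟩ := hqm z hz
    rw [← hy2, hkhl y hy]
  refine ⟨?_, fun z => kh (q z), hηa, hη0, hηm, hqη⟩
  have hηle : ∀ z ∈ ball (0:ℂ) 1, ‖kh (q z)‖ ≤ ‖z‖ := by
    intro z hz
    exact Complex.norm_le_norm_of_mapsTo_ball (R := 1) (f := fun z => kh (q z))
      hηa.differentiableOn
      (fun w hw => ball_subset_closedBall (hηm w hw)) hη0 (by simpa using hz)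
  have hφm : ∀ z ∈ ball (0:ℂ) 1, φ z ∈ q '' ball 0 1 := by
    by_contra! hbad
    obtain ⟨z₁, hz₁, hbad⟩ := hbad
    have hsub' : closedBall (0:ℂ) ‖z₁‖ ⊆ ball 0 1 := closedBall_subset_ball (by simpa using hz₁)
    have hcl : IsCompact (closedBall (0:ℂ) ‖z₁‖ ∩ φ ⁻¹' (q '' ball 0 1)ᶜ) :=
      (isCompact_closedBall (0:ℂ) ‖z₁‖).of_isClosed_subset
        ((hφ.continuousOn.mono hsub').preimage_isClosed_of_isClosed isClosed_closedBall
          hW.isClosed_compl) inter_subset_left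
    obtain ⟨z, ⟨hz, hzb⟩, hmin⟩ := hcl.exists_isMinOn (f := fun w => ‖w‖)
      ⟨z₁, by simp, hbad⟩ continuous_norm.continuousOn
    have hz1 := hsub' hz
    have hz0 : z ≠ 0 := by
      rintro rfl
      apply hzb
      rw [hφ0, ← hq0]
      exact mem_image_of_mem q h01
    have hzp : 0 < ‖z‖ := by simpa using hz0
    have hmem : ∀ w ∈ ball (0:ℂ) ‖z‖, φ w ∈ q '' ball 0 1 := by
      intro w hw
      by_contra hwb
      have hw' : ‖w‖ < ‖z‖ := by simpa using hw
      have hz' : ‖z‖ ≤ ‖z₁‖ := by simpa using hz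
      have : ‖z‖ ≤ ‖w‖ := hmin ⟨by simp; linarith, hwb⟩
      linarith
    have hst := aux_step hzp (by simpa using (mem_ball_zero_iff.1 hz1).le) hh hinj hconv hμ hq hode
      hkl hka hηle hqη hφ (by rw [hφ0, hq0]) hω hω0 hωm hsub hmem
    have hcs : closedBall (0:ℂ) ‖z‖ ⊆ ball 0 1 := closedBall_subset_ball (by simpa using hz1)
    have hcomp : IsClosed (q '' closedBall 0 ‖z‖) :=
      ((isCompact_closedBall (0:ℂ) ‖z‖).image_of_continuousOn (hq.continuousOn.mono hcs)).isClosed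
    have hin : φ z ∈ q '' closedBall 0 ‖z‖ := by
      have hzcl : z ∈ closure (ball (0:ℂ) ‖z‖) := by
        rw [closure_ball _ hzp.ne']; simp
      have hmt : MapsTo φ (ball (0:ℂ) ‖z‖) (q '' closedBall 0 ‖z‖) := by
        intro w hw
        refine ⟨k (φ w), ?_, ?_⟩
        · have := hst w hw
          have hw' : ‖w‖ < ‖z‖ := by simpa using hw
          simp; linarith
        · obtain ⟨y, hy, hy2⟩ := hmem w hw
          rw [← hy2, hkl y hy]
      have := (hφ z hz1).continuousAt.continuousWithinAt.mem_closure hzcl hmt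
      rwa [hcomp.closure_eq] at this
    exact hzb (image_mono hcs hin)
  refine ⟨fun z => k (φ z), fun z hz => AnalyticAt.fun_comp (hka _ (hφm z hz)) (hφ z hz), ?_, ?_, ?_⟩
  · simp only []
    rw [hφ0, ← hq0, hkl 0 h01]
  · intro z hz
    obtain ⟨y, hy, hy2⟩ := hφm z hz
    simp only []
    rw [← hy2, hkl y hy]; exact hy
  · intro z hz
    obtain ⟨y, hy, hy2⟩ := hφm z hz
    simp only []
    rw [← hy2, hkl y hy]
end

section
/- Let ζ ≥ 1 be a real number and let w ∈ ℂ with Re w > 0. Then Re(w^{1/ζ}) ≥ (Re w)^{1/ζ}, where w^{1/ζ} denotes the principal complex power. -/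
open Complex

/-- for real `ζ ≥ 1` and `Re w > 0`,
`Re(w^{1/ζ}) ≥ (Re w)^{1/ζ}` (principal complex power, real power on the right). -/
theorem stmt12 (ζ : ℝ) (hζ : 1 ≤ ζ) (w : ℂ) (hw : 0 < w.re) :
    w.re ^ (1 / ζ) ≤ (w ^ ((1 / ζ : ℝ) : ℂ)).re := by
  have hs0 : 0 ≤ 1 / ζ := by positivity
  have hs1 : 1 / ζ ≤ 1 := by rw [div_le_one (by linarith)]; exact hζ
  generalize 1 / ζ = s at hs0 hs1
  have harg : |arg w| < Real.pi / 2 := abs_arg_lt_pi_div_two_iff.2 (Or.inl hw)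
  rw [cpow_ofReal_re, mul_comm (arg w) s]
  have hre : w.re = ‖w‖ * Real.cos (arg w) := (norm_mul_cos_arg w).symm
  obtain ⟨h1, h2⟩ := abs_lt.1 harg
  have hcos : 0 ≤ Real.cos (arg w) := Real.cos_nonneg_of_mem_Icc ⟨by linarith, h2.le⟩
  have hpi := Real.pi_pos
  rw [hre, Real.mul_rpow (norm_nonneg _) hcos]
  refine mul_le_mul_of_nonneg_left ?_ (by positivity)
  have hb := rpow_one_add_le_one_add_mul_self (s := Real.cos (arg w) - 1)
    (by linarith) hs0 hs1
  have hc := strictConcaveOn_cos_Icc.concaveOn.2 (x := 0) (y := arg w)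
    ⟨by linarith, by linarith⟩ ⟨by linarith, h2.le⟩ (sub_nonneg.2 hs1) hs0 (by ring)
  simp only [smul_eq_mul, Real.cos_zero, mul_zero, zero_add] at hc
  rw [add_sub_cancel] at hb
  linarith
end
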